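/- Let M = G/H be a compact homogeneous LCK manifold and let ξ ∈ 𝔷 be a nonzero central element with θ(ξ) ≡ 0. Write θ = a·(Jξ)^♭ + θ₀ with a ∈ ℝ and θ₀ orthogonal to span{ξ, Jξ}. Then for every X ∈ 𝔤, the function f_X := g(X, Jξ) satisfies df_X = 2 θ₀(X) (Jξ)^♭ − 2 f_X θ₀. -/

import Mathlib

/-!
We work in an abstract, algebraic model of the differential geometry of a
(connected) smooth manifold `M`, since Mathlib does not yet provide Riemannian
metrics, Levi-Civita connections or Kähler/LCK geometry.

In the structure `RiemannianVF` below, `Pt` is the set of points of `M`,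
`Fn` the commutative `ℝ`-algebra of smooth real-valued functions on `M`
(together with pointwise evaluation `eval`), `Vec` the `Fn`-module of smooth
vector fields, `D X f` the derivative of the function `f` in the direction of
the vector field `X`, `lie` the Lie bracket of vector fields, `g` a Riemannian
metric and `nabla` its Levi-Civita connection (characterized by being
torsion-free and metric).  Genuine Riemannian manifolds provide models of this
structure.
-/

/-- Abstract model of the smooth functions / vector fields / Lie bracket /
Riemannian metric / Levi-Civita connection of a connected Riemannian
manifold. -/
structure RiemannianVF where
  /-- the points of the manifold `M` -/
  Pt : Type
  /-- the smooth real valued functions on `M` -/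
  Fn : Type
  [instCommRing : CommRing Fn]
  [instAlgebra : Algebra ℝ Fn]
  /-- evaluation of a smooth function at a point of `M` -/
  eval : Fn →ₐ[ℝ] (Pt → ℝ)
  eval_injective : Function.Injective eval
  /-- the smooth vector fields on `M` -/
  Vec : Type
  [instAddCommGroup : AddCommGroup Vec]
  [instModuleFn : Module Fn Vec]
  [instModuleR : Module ℝ Vec]
  [instTower : IsScalarTower ℝ Fn Vec]
  /-- derivative of a smooth function along a vector field -/
  D : Vec → Fn → Fn
  D_add_left : ∀ X Y f, D (X + Y) f = D X f + D Y f
  D_smul_left : ∀ (f : Fn) (X : Vec) (h : Fn), D (f • X) h = f * D X h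
  D_add : ∀ X f h, D X (f + h) = D X f + D X h
  D_mul : ∀ X f h, D X (f * h) = f * D X h + h * D X f
  D_algebraMap : ∀ X (c : ℝ), D X (algebraMap ℝ Fn c) = 0
  /-- the Lie bracket of vector fields -/
  lie : Vec → Vec → Vec
  lie_skew : ∀ X Y, lie X Y = - lie Y X
  lie_add_left : ∀ X Y Z, lie (X + Y) Z = lie X Z + lie Y Z
  lie_smul : ∀ X (f : Fn) Y, lie X (f • Y) = (D X f) • Y + f • lie X Y
  lie_jacobi : ∀ X Y Z, lie X (lie Y Z) = lie (lie X Y) Z + lie Y (lie X Z)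
  D_lie : ∀ X Y f, D (lie X Y) f = D X (D Y f) - D Y (D X f)
  /-- the Riemannian metric -/
  g : Vec → Vec → Fn
  g_symm : ∀ X Y, g X Y = g Y X
  g_add_left : ∀ X Y Z, g (X + Y) Z = g X Z + g Y Z
  g_smul_left : ∀ (f : Fn) X Y, g (f • X) Y = f * g X Y
  g_nondeg : ∀ X, (∀ Y, g X Y = 0) → X = 0
  /-- the Levi-Civita connection of `g` -/
  nabla : Vec → Vec → Vec
  nabla_add_left : ∀ X Y Z, nabla (X + Y) Z = nabla X Z + nabla Y Z
  nabla_smul_left : ∀ (f : Fn) X Y, nabla (f • X) Y = f • nabla X Y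
  nabla_add : ∀ X Y Z, nabla X (Y + Z) = nabla X Y + nabla X Z
  nabla_smul : ∀ X (f : Fn) Y, nabla X (f • Y) = (D X f) • Y + f • nabla X Y
  torsion_free : ∀ X Y, nabla X Y - nabla Y X = lie X Y
  metric_compat : ∀ X Y Z, D X (g Y Z) = g (nabla X Y) Z + g Y (nabla X Z)
  /-- `M` is connected: a function with vanishing differential is constant -/
  connected : ∀ f, (∀ X, D X f = 0) → ∃ c : ℝ, f = algebraMap ℝ Fn c

attribute [instance] RiemannianVF.instCommRing RiemannianVF.instAlgebra
  RiemannianVF.instAddCommGroup RiemannianVF.instModuleFn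
  RiemannianVF.instModuleR RiemannianVF.instTower

/-- An almost Hermitian manifold: a Riemannian manifold together with a
skew-symmetric endomorphism `J` of the tangent bundle with `J ∘ J = -id`. -/
structure AlmostHermitianVF extends RiemannianVF where
  /-- the almost complex structure -/
  J : Vec → Vec
  J_add : ∀ X Y, J (X + Y) = J X + J Y
  J_smul : ∀ (f : Fn) X, J (f • X) = f • J X
  J_sq : ∀ X, J (J X) = - X
  J_skew : ∀ X Y, g (J X) Y = - g X (J Y)

namespace AlmostHermitianVF

variable (S : AlmostHermitianVF)

/-- the Lie derivative `(L_X J)(Y) = [X, JY] - J [X, Y]` of `J` along `X` -/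
def lieJ (X Y : S.Vec) : S.Vec := S.lie X (S.J Y) - S.J (S.lie X Y)

/-- the Nijenhuis tensor `N^J(X,Y) = [X,Y] + J[X,JY] + J[JX,Y] - [JX,JY]` -/
def nijenhuis (X Y : S.Vec) : S.Vec :=
  S.lie X Y + S.J (S.lie X (S.J Y)) + S.J (S.lie (S.J X) Y) - S.lie (S.J X) (S.J Y)

/-- the fundamental 2-form `ω = g(J·,·)` -/
def omega (X Y : S.Vec) : S.Fn := S.g (S.J X) Y

/-- the exterior differential of the fundamental 2-form `ω`, via the usual
Koszul-type formula -/
def dOmega (X Y Z : S.Vec) : S.Fn :=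
  S.D X (S.omega Y Z) - S.D Y (S.omega X Z) + S.D Z (S.omega X Y)
    - S.omega (S.lie X Y) Z + S.omega (S.lie X Z) Y - S.omega (S.lie Y Z) X

/-- a vector field `X` is holomorphic if `L_X J = 0` -/
def Holomorphic (X : S.Vec) : Prop := ∀ Y, S.lieJ X Y = 0

end AlmostHermitianVF

/-- A Hermitian manifold: an almost Hermitian manifold whose almost complex
structure is integrable (vanishing Nijenhuis tensor). -/
structure HermitianVF extends AlmostHermitianVF where
  integrable : ∀ X Y, toAlmostHermitianVF.nijenhuis X Y = 0

/-- A Kähler manifold: a Hermitian manifold whose complex structure is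
parallel with respect to the Levi-Civita connection. -/
structure KaehlerVF extends HermitianVF where
  kaehler : ∀ X Y, nabla X (J Y) = J (nabla X Y)

/-- A locally conformally Kähler (LCK) manifold: a Hermitian manifold whose
fundamental 2-form `ω` satisfies `dω = -2 θ ∧ ω` for a closed 1-form `θ`
(the Lee form). -/
structure LCKVF extends HermitianVF where
  /-- the Lee form -/
  θ : Vec → Fn
  θ_add : ∀ X Y, θ (X + Y) = θ X + θ Y
  θ_smul : ∀ (f : Fn) X, θ (f • X) = f * θ X
  /-- the Lee form is closed -/
  θ_closed : ∀ X Y, D X (θ Y) - D Y (θ X) - θ (lie X Y) = 0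
  /-- the LCK condition `dω = -2 θ ∧ ω` -/
  lck : ∀ X Y Z, toAlmostHermitianVF.dOmega X Y Z =
    -(2 : Fn) * (θ X * toAlmostHermitianVF.omega Y Z
      - θ Y * toAlmostHermitianVF.omega X Z
      + θ Z * toAlmostHermitianVF.omega X Y)

/-- A compact homogeneous locally conformally Kähler manifold `M = G/H`:
a compact connected LCK manifold with nonvanishing Lee form `θ` normalized to
unit length, acted on transitively and effectively by a compact connected Lie
group `G` of holomorphic isometries.  The action is recorded infinitesimally:
`gAlg` is the Lie algebra `𝔤` of `G`, realized as the (finite-dimensional) Lie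
algebra of fundamental vector fields on `M` (recall `[X^a, X^b] = -X^{[a,b]}`,
so `gAlg` is a Lie subalgebra of the vector fields, anti-isomorphic to `𝔤`);
the fundamental fields are Killing (`G` acts by isometries) and holomorphic
(`G` preserves `J`), they span every tangent space (`G` acts transitively,
recorded both pointwise and through the constancy of invariant functions),
and `𝔤` is the Lie algebra of a *compact* group, i.e. it is reductive:
`𝔤 = 𝔷(𝔤) ⊕ [𝔤,𝔤]` (recorded as: `𝔤` is spanned by central elements and
brackets).  Compactness of `M` is recorded via a topology on the points
together with the first-derivative test for extrema of smooth functions. -/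
structure CompactHomogeneousLCKVF extends LCKVF where
  [instTop : TopologicalSpace Pt]
  [instCompact : CompactSpace Pt]
  [instNonempty : Nonempty Pt]
  eval_continuous : ∀ f, Continuous (eval f)
  /-- the first-derivative test: at a global extremum the differential of a
  smooth function vanishes (every global extremum exists by compactness) -/
  eval_crit : ∀ (f : Fn) (x : Pt),
    (IsMaxOn (eval f) Set.univ x ∨ IsMinOn (eval f) Set.univ x) →
    ∀ X, eval (D X f) x = 0
  /-- the vector field `θ^♯` metrically dual to the Lee form -/
  θsharp : Vec
  θsharp_spec : ∀ Y, g θsharp Y = θ Y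
  /-- the Lee form has unit length (in particular `θ ≠ 0`) -/
  θ_unit : g θsharp θsharp = 1
  /-- the Lie algebra `𝔤` of fundamental vector fields of the `G`-action -/
  gAlg : Submodule ℝ Vec
  gAlg_fd : FiniteDimensional ℝ gAlg
  gAlg_lie : ∀ X ∈ gAlg, ∀ Y ∈ gAlg, lie X Y ∈ gAlg
  /-- `G` acts by isometries: fundamental fields are Killing -/
  gAlg_killing : ∀ X ∈ gAlg, ∀ Y Z, D X (g Y Z) = g (lie X Y) Z + g Y (lie X Z)
  /-- `G` preserves `J`: fundamental fields are holomorphic -/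
  gAlg_holo : ∀ X ∈ gAlg, ∀ Y, lie X (J Y) = J (lie X Y)
  /-- `G` preserves the Lee form -/
  gAlg_theta : ∀ X ∈ gAlg, ∀ Y, D X (θ Y) = θ (lie X Y)
  /-- transitivity, pointwise: every tangent vector at every point is the
  value of a fundamental vector field -/
  gAlg_span : ∀ (V : Vec) (x : Pt), ∃ X ∈ gAlg, ∀ f, eval (D X f) x = eval (D V f) x
  /-- transitivity: `G`-invariant functions are constant -/
  gAlg_transitive : ∀ f, (∀ X ∈ gAlg, D X f = 0) → ∃ c : ℝ, f = algebraMap ℝ Fn c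
  /-- `𝔤` is the Lie algebra of a compact Lie group, hence reductive:
  it is spanned by its center together with its derived algebra -/
  gAlg_reductive : ∀ X ∈ gAlg, X ∈ Submodule.span ℝ
    ({Z | Z ∈ gAlg ∧ ∀ W ∈ gAlg, lie Z W = 0} ∪
     {Z | ∃ U ∈ gAlg, ∃ V ∈ gAlg, Z = lie U V})

attribute [instance] CompactHomogeneousLCKVF.instTop
  CompactHomogeneousLCKVF.instCompact CompactHomogeneousLCKVF.instNonempty
  CompactHomogeneousLCKVF.gAlg_fd

namespace CompactHomogeneousLCKVF

variable (S : CompactHomogeneousLCKVF)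

/-- the set of fundamental vector fields coming from the center `𝔷` of `𝔤` -/
def centerSet : Set S.Vec :=
  {X | X ∈ S.gAlg ∧ ∀ Y ∈ S.gAlg, S.lie X Y = 0}

/-- the dimension of the center `𝔷` of `𝔤` (the centralizer set is an
`ℝ`-subspace of `𝔤`, so it coincides with its span) -/
noncomputable def centerDim : ℕ :=
  Module.finrank ℝ (Submodule.span ℝ (centerSet S))

/-- a compact homogeneous LCK manifold is Vaisman if its Lee form is parallel:
`∇θ = 0`, equivalently `∇θ^♯ = 0`. -/
def Vaisman : Prop := ∀ X, S.nabla X S.θsharp = 0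

end CompactHomogeneousLCKVF

/-!
The Lie derivatives of `ω` along two fields `U` and `V` preserving it vanish, so the Koszul formula
for `dω(U, V, W)` collapses to `D_W ω(U, V) + ω([U, V], W)`. For `U = ξ` and `V = X` commuting with
`ξ`, the condition `dω = -2 θ ∧ ω` thus computes the differential of `g(X, Jξ) = ω(ξ, X)`, and when
`θ(ξ) = 0` the result is `2 θ(X) (Jξ)^♭ - 2 g(X, Jξ) θ`. This expression does not change when a
multiple of `(Jξ)^♭` is subtracted from `θ`, which allows `θ` to be replaced by `θ₀`.
-/

/-- A vector field `X` is Killing if its flow preserves the metric: `L_X g = 0`. -/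
def RiemannianVF.IsKilling (S : RiemannianVF) (X : S.Vec) : Prop :=
  ∀ Y Z, S.D X (S.g Y Z) = S.g (S.lie X Y) Z + S.g Y (S.lie X Z)

namespace AlmostHermitianVF

variable {S : AlmostHermitianVF} {X Y : S.Vec}

/-- A vector field `X` preserves the fundamental 2-form if `L_X ω = 0`, written out with the
Leibniz rule. -/
def PreservesOmega (S : AlmostHermitianVF) (X : S.Vec) : Prop :=
  ∀ Y Z, S.D X (S.omega Y Z) = S.omega (S.lie X Y) Z + S.omega Y (S.lie X Z)

theorem omega_swap (X Y : S.Vec) : S.omega X Y = -S.omega Y X := by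
  rw [omega, S.J_skew, S.g_symm, omega]

theorem omega_smul_left (f : S.Fn) (X Y : S.Vec) : S.omega (f • X) Y = f * S.omega X Y := by
  rw [omega, S.J_smul, S.g_smul_left, omega]

theorem omega_zero_left (Y : S.Vec) : S.omega 0 Y = 0 := by
  simpa using omega_smul_left 0 0 Y

theorem omega_neg_left (X Y : S.Vec) : S.omega (-X) Y = -S.omega X Y := by
  simpa using omega_smul_left (-1) X Y

theorem Holomorphic.lie_J (hX : S.Holomorphic X) (Y : S.Vec) :
    S.lie X (S.J Y) = S.J (S.lie X Y) :=
  sub_eq_zero.mp (hX Y)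

theorem Holomorphic.preservesOmega (hX : S.Holomorphic X) (hXg : S.IsKilling X) :
    S.PreservesOmega X := by
  intro Y Z
  simp only [omega]
  rw [hXg, hX.lie_J]

theorem PreservesOmega.dOmega_eq (hX : S.PreservesOmega X) (hY : S.PreservesOmega Y)
    (Z : S.Vec) :
    S.dOmega X Y Z = S.D Z (S.omega X Y) + S.omega (S.lie X Y) Z := by
  rw [dOmega, hX Y Z, hY X Z, S.lie_skew Y X, omega_neg_left, omega_swap (S.lie X Z) Y,
    omega_swap (S.lie Y Z) X]
  ring

end AlmostHermitianVF

theorem LCKVF.D_omega_eq {S : LCKVF} {X Y : S.Vec} (hX : S.PreservesOmega X)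
    (hY : S.PreservesOmega Y) (Z : S.Vec) :
    S.D Z (S.omega X Y) =
      -2 * (S.θ X * S.omega Y Z - S.θ Y * S.omega X Z + S.θ Z * S.omega X Y)
        - S.omega (S.lie X Y) Z := by
  rw [← S.lck, hX.dOmega_eq hY, add_sub_cancel_right]

theorem CompactHomogeneousLCKVF.preservesOmega_of_mem_gAlg (S : CompactHomogeneousLCKVF)
    {X : S.Vec} (hX : X ∈ S.gAlg) : S.PreservesOmega X := by
  have hol : S.Holomorphic X := fun Y => sub_eq_zero.mpr (S.gAlg_holo X hX Y)
  exact hol.preservesOmega (S.gAlg_killing X hX)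

theorem dfX_eq_general (S : LCKVF) {ξ X : S.Vec} (hξ : S.PreservesOmega ξ)
    (hX : S.PreservesOmega X) (hξX : S.lie ξ X = 0) (hθξ : S.θ ξ = 0)
    (b : S.Fn) (θ₀ : S.Vec → S.Fn) (hdec : ∀ Y, S.θ Y = b * S.g (S.J ξ) Y + θ₀ Y) (Y : S.Vec) :
    S.D Y (S.g X (S.J ξ)) =
      2 * θ₀ X * S.g (S.J ξ) Y - 2 * S.g X (S.J ξ) * θ₀ Y := by
  have df_eq : S.D Y (S.omega ξ X) =
      2 * S.θ X * S.omega ξ Y - 2 * S.omega ξ X * S.θ Y := by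
    rw [LCKVF.D_omega_eq hξ hX, hξX, hθξ, AlmostHermitianVF.omega_zero_left]
    ring
  simp only [AlmostHermitianVF.omega] at df_eq
  rw [S.g_symm X (S.J ξ), df_eq, hdec X, hdec Y]
  ring

/-- equation (2) in the proof of Lemma 3.2.  Let `M = G/H`
be a compact homogeneous LCK manifold and `ξ ∈ 𝔷` a nonzero central element
with `θ(ξ) ≡ 0`.  Write `θ = a (Jξ)^♭ + θ₀` with `a ∈ ℝ` and `θ₀` orthogonal
to `span{ξ, Jξ}` (i.e. `θ₀(ξ) = 0` and `θ₀(Jξ) = 0`).  Then for every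
`X ∈ 𝔤` the function `f_X := g(X, Jξ)` satisfies
`d f_X = 2 θ₀(X) (Jξ)^♭ - 2 f_X θ₀`,
i.e. `D_Y f_X = 2 θ₀(X) g(Jξ, Y) - 2 f_X θ₀(Y)` for all vector fields `Y`. -/
theorem dfX_eq (S : CompactHomogeneousLCKVF)
    (ξ : S.Vec) (hξc : ξ ∈ S.centerSet) (hξ0 : ξ ≠ 0)
    (hθξ : S.θ ξ = 0)
    (a : ℝ) (θ₀ : S.Vec → S.Fn)
    (hdec : ∀ Y, S.θ Y = algebraMap ℝ S.Fn a * S.g (S.J ξ) Y + θ₀ Y)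
    (hθ₀ξ : θ₀ ξ = 0) (hθ₀Jξ : θ₀ (S.J ξ) = 0)
    (X : S.Vec) (hX : X ∈ S.gAlg) :
    ∀ Y : S.Vec,
      S.D Y (S.g X (S.J ξ)) =
        2 * θ₀ X * S.g (S.J ξ) Y - 2 * S.g X (S.J ξ) * θ₀ Y :=
  dfX_eq_general S.toLCKVF (S.preservesOmega_of_mem_gAlg hξc.1)
    (S.preservesOmega_of_mem_gAlg hX) (hξc.2 X hX) hθξ (algebraMap ℝ S.Fn a) θ₀ hdec
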